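/- arXiv:1612.01442 — 2 statements merged into one kernel-verified Lean document; each statement's English description precedes it below -/
import Mathlib

section
/- Let G* be the HNN extension of G with associated subgroups A, B via φ: A → B, and let Δ: G* → ℝ be defined from signatures as Δ(g) = Σ_{k≥1} r_k(g). Then for any g, h ∈ G*, Δ(gh) ≤ Δ(g) + Δ(h) + 6; i.e., Δ is a quasi-homomorphism. -/
/-!
Modulo 2 the signs of the blocks do not matter, so `Δ(g)` is the number of lengths `k ≥ 1` for
which the signature of `g` has an odd number of maximal blocks of length `k`.

If `g` and `h` are given by reduced words, the reduced form of `gh` arises by cancelling a suffix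
of the first word against a prefix of the second (`exists_cancellation`): the signatures are
`S C`, `C⁻¹ T` and `S T`, where `C⁻¹` is `C` reversed with its signs changed. By uniqueness of
signatures (`sqn_eq`, from Britton's lemma) these are the signatures in the statement.

Block counts are additive under concatenation, except when the last sign of the first list equals
the first sign of the second; then a block of length `a` merges with a block of length `b`, and
only the counts for the three lengths `a`, `b`, `a + b` change (`exists_error`). Since `C` and
`C⁻¹` have the same block counts, their contributions cancel modulo 2, so the parity for `S T` is
the sum of those for `S C` and `C⁻¹ T` except at lengths affected by a merge. The three junctions
cannot all merge (`not_three_merges`), so at most `2 * 3 = 6` lengths are exceptional.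
-/

open HNNExtension

open scoped Classical

namespace PalHNN

variable {G : Type*} [Group G] (A B : Subgroup G) (φ : A ≃* B)

/-- The HNN extension `⟨G, t | t⁻¹ a t = φ a, a ∈ A⟩`.  In Mathlib's `HNNExtension G X Y ψ`
the defining relation is `t x t⁻¹ = ψ x` for `x ∈ X`, so the paper's group is
`HNNExtension G B A φ.symm`. -/
abbrev HNN := HNNExtension G B A φ.symm

/-- The element `g₀ t^{ε₁} g₁ ⋯ t^{εₙ} gₙ` of the HNN extension determined by a head `g₀`
and a list of pairs `(εᵢ, gᵢ)`. -/
def wordProd (g0 : G) (l : List (ℤˣ × G)) : HNN A B φ :=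
  of g0 * (l.map fun p => t ^ (p.1 : ℤ) * of p.2).prod

/-- The product `gₙ t^{εₙ} g_{n-1} t^{ε_{n-1}} ⋯ g₁ t^{ε₁} g₀` of the reverse of the word
`g₀ t^{ε₁} g₁ ⋯ t^{εₙ} gₙ`. -/
def revProd (g0 : G) (l : List (ℤˣ × G)) : HNN A B φ :=
  (l.reverse.map fun p => of p.2 * t ^ (p.1 : ℤ)).prod * of g0

/-- A word `g₀ t^{ε₁} g₁ ⋯ t^{εₙ} gₙ` is reduced iff it contains no subword `t⁻¹ gᵢ t` with
`gᵢ ∈ A` and no subword `t gᵢ t⁻¹` with `gᵢ ∈ B`. -/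
def HNNReduced (l : List (ℤˣ × G)) : Prop :=
  List.Chain' (fun p q => ¬(p.1 = -1 ∧ p.2 ∈ A ∧ q.1 = 1) ∧ ¬(p.1 = 1 ∧ p.2 ∈ B ∧ q.1 = -1)) l

/-- An element of the HNN extension is a group-palindrome if it has a reduced expression
`g₀ t^{ε₁} g₁ ⋯ t^{εₙ} gₙ` whose reverse `gₙ t^{εₙ} g_{n-1} ⋯ g₁ t^{ε₁} g₀` represents the
same element. -/
def GroupPalindrome (x : HNN A B φ) : Prop :=
  ∃ (g0 : G) (l : List (ℤˣ × G)),
    HNNReduced A B l ∧ wordProd A B φ g0 l = x ∧ revProd A B φ g0 l = x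

/-- The signature `(ε₁, …, εₙ)` of an element, read off from a chosen reduced expression. -/
noncomputable def sqn (x : HNN A B φ) : List ℤˣ :=
  if h : ∃ p : G × List (ℤˣ × G), HNNReduced A B p.2 ∧ wordProd A B φ p.1 p.2 = x then
    (Classical.choose h).2.map Prod.fst
  else []

/-- The number of maximal blocks of consecutive `v`'s of length exactly `k` in the list `s`. -/
noncomputable def blockCount (v : ℤˣ) (k : ℕ) (s : List ℤˣ) : ℕ :=
  ((Finset.range (s.length + 1)).filter fun i => ∃ pre post : List ℤˣ,
    s = pre ++ List.replicate k v ++ post ∧ pre.length = i ∧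
      pre.getLast? ≠ some v ∧ post.head? ≠ some v).card

/-- `p_k`: the number of maximal blocks of `+1`'s of length `k` in the signature. -/
noncomputable def pk (k : ℕ) (x : HNN A B φ) : ℕ := blockCount 1 k (sqn A B φ x)

/-- `m_k`: the number of maximal blocks of `-1`'s of length `k` in the signature. -/
noncomputable def mk (k : ℕ) (x : HNN A B φ) : ℕ := blockCount (-1) k (sqn A B φ x)

/-- `d_k = p_k - m_k`. -/
noncomputable def dk (k : ℕ) (x : HNN A B φ) : ℤ := (pk A B φ k x : ℤ) - (mk A B φ k x : ℤ)

/-- `r_k ∈ {0,1}`: the remainder of `d_k` modulo 2. -/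
noncomputable def rk (k : ℕ) (x : HNN A B φ) : ℤ := dk A B φ k x % 2

/-- The quasi-homomorphism `Δ(g) = Σ_{k ≥ 1} r_k(g)` (the sum is finite since `r_k = 0` for
`k` larger than the length of the signature). -/
noncomputable def Delta (x : HNN A B φ) : ℝ :=
  ∑ k ∈ Finset.Icc 1 (sqn A B φ x).length, (rk A B φ k x : ℝ)

/-! ### Counting blocks in a list of signs -/

/-- `i` is the starting position of a maximal block of exactly `k` consecutive `v`'s in `s`. -/
def IsBlock (v : ℤˣ) (k : ℕ) (s : List ℤˣ) (i : ℕ) : Prop :=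
  ∃ pre post : List ℤˣ, s = pre ++ List.replicate k v ++ post ∧ pre.length = i ∧
    pre.getLast? ≠ some v ∧ post.head? ≠ some v

lemma blockCount_eq (v : ℤˣ) (k : ℕ) (s : List ℤˣ) :
    blockCount v k s = ((Finset.range (s.length + 1)).filter (IsBlock v k s)).card := rfl

lemma IsBlock.add_le {v : ℤˣ} {k : ℕ} {s : List ℤˣ} {i : ℕ} (h : IsBlock v k s i) :
    i + k ≤ s.length := by
  obtain ⟨pre, post, rfl, rfl, -, -⟩ := h
  simp

/-- Entrywise description of a block, which makes membership questions about concatenations and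
reversals a matter of index arithmetic. -/
lemma isBlock_iff (v : ℤˣ) (k : ℕ) (s : List ℤˣ) (i : ℕ) :
    IsBlock v k s i ↔ i + k ≤ s.length ∧ (∀ j, i ≤ j → j < i + k → s[j]? = some v) ∧
      s[i + k]? ≠ some v ∧ (∀ j, j + 1 = i → s[j]? ≠ some v) := by
  constructor
  · intro h
    refine ⟨h.add_le, ?_⟩
    obtain ⟨pre, post, rfl, rfl, h1, h2⟩ := h
    rw [List.getLast?_eq_getElem?] at h1
    rw [List.head?_eq_getElem?] at h2
    refine ⟨fun j hj hj' => ?_, ?_, fun j hj => ?_⟩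
    · grind
    · grind
    · grind
  · rintro ⟨h0, h1, h2, h3⟩
    refine ⟨s.take i, s.drop (i + k), ?_, ?_, ?_, ?_⟩
    · apply List.ext_getElem?
      intro j
      rcases lt_or_ge j i with hj | hj
      · grind
      · rcases lt_or_ge j (i + k) with hj' | hj'
        · rw [h1 j hj hj']; grind
        · grind
    · grind
    · rw [List.getLast?_eq_getElem?]
      rcases i with _ | i
      · simp
      · have := h3 i rfl
        grind
    · rw [List.head?_eq_getElem?]
      grind

lemma blockCount_eq_zero {v : ℤˣ} {k : ℕ} {s : List ℤˣ} (h : s.length < k) :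
    blockCount v k s = 0 := by
  rw [blockCount_eq, Finset.card_eq_zero, Finset.filter_eq_empty_iff]
  intro i _ hi
  have := hi.add_le
  omega

/-- Blocks do not interact across a junction at which the sign changes (or one side is empty). -/
lemma blockCount_append {v : ℤˣ} {k : ℕ} (hk : 1 ≤ k) {s t : List ℤˣ}
    (hst : ¬ (s.getLast? = some v ∧ t.head? = some v)) :
    blockCount v k (s ++ t) = blockCount v k s + blockCount v k t := by
  rw [List.getLast?_eq_getElem?, List.head?_eq_getElem?] at hst
  have hs : (Finset.range ((s ++ t).length + 1)).filter (IsBlock v k (s ++ t)) =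
      (Finset.range (s.length + 1)).filter (IsBlock v k s) ∪
      ((Finset.range (t.length + 1)).filter (IsBlock v k t)).map
        (addLeftEmbedding s.length) := by
    ext i
    simp only [Finset.mem_filter, Finset.mem_union, Finset.mem_map, Finset.mem_range,
      addLeftEmbedding_apply, isBlock_iff, List.length_append]
    constructor
    · rintro ⟨hi, h0, h1, h2, h3⟩
      rcases lt_or_ge i s.length with his | his
      · have hik : i + k ≤ s.length := by
          -- otherwise the block straddles the junction, so both of its sides carry `v`
          by_contra hlt
          have e1 := h1 (s.length - 1) (by omega) (by omega)
          have e2 := h1 s.length (by omega) (by omega)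
          rw [List.getElem?_append_left (by omega)] at e1
          rw [List.getElem?_append_right (by omega), Nat.sub_self] at e2
          exact hst ⟨e1, e2⟩
        left
        refine ⟨by omega, hik, fun j hj hj' => ?_, ?_, fun j hj => ?_⟩
        · have := h1 j hj hj'
          rwa [List.getElem?_append_left (by omega)] at this
        · grind
        · have := h3 j hj
          rwa [List.getElem?_append_left (by omega)] at this
      · right
        obtain ⟨i', rfl⟩ := Nat.exists_eq_add_of_le his
        refine ⟨i', ⟨by omega, by omega, fun j hj hj' => ?_, ?_, fun j hj => ?_⟩, rfl⟩
        · have := h1 (s.length + j) (by omega) (by omega)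
          rwa [List.getElem?_append_right (by omega), Nat.add_sub_cancel_left] at this
        · rwa [Nat.add_assoc, List.getElem?_append_right (by omega),
            Nat.add_sub_cancel_left] at h2
        · have := h3 (s.length + j) (by omega)
          rwa [List.getElem?_append_right (by omega), Nat.add_sub_cancel_left] at this
    · rintro (⟨hi, h0, h1, h2, h3⟩ | ⟨i', ⟨hi, h0, h1, h2, h3⟩, rfl⟩)
      · refine ⟨by omega, by omega, fun j hj hj' => ?_, ?_, fun j hj => ?_⟩
        · rw [List.getElem?_append_left (by omega)]
          exact h1 j hj hj'
        · rcases lt_or_ge (i + k) s.length with hl | hl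
          · rwa [List.getElem?_append_left hl]
          · have e1 := h1 (s.length - 1) (by omega) (by omega)
            rw [List.getElem?_append_right hl, show i + k - s.length = 0 by omega]
            exact fun e2 => hst ⟨e1, e2⟩
        · rw [List.getElem?_append_left (by omega)]
          exact h3 j hj
      · refine ⟨by omega, by omega, fun j hj hj' => ?_, ?_, fun j hj => ?_⟩
        · rw [List.getElem?_append_right (by omega)]
          exact h1 _ (by omega) (by omega)
        · rwa [Nat.add_assoc, List.getElem?_append_right (by omega), Nat.add_sub_cancel_left]
        · rcases lt_or_ge j s.length with hl | hl
          · have e2 := h1 0 (by omega) (by omega)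
            rw [List.getElem?_append_left hl, show j = s.length - 1 by omega]
            exact fun e1 => hst ⟨e1, e2⟩
          · rw [List.getElem?_append_right hl]
            exact h3 _ (by omega)
  rw [blockCount_eq, hs, Finset.card_union_of_disjoint, Finset.card_map, ← blockCount_eq,
    ← blockCount_eq]
  rw [Finset.disjoint_left]
  intro i hi hi'
  simp only [Finset.mem_filter, Finset.mem_map, addLeftEmbedding_apply] at hi hi'
  obtain ⟨i', -, rfl⟩ := hi'
  have := hi.2.add_le
  omega

lemma blockCount_replicate_of_ne {v u : ℤˣ} {k a : ℕ} (hk : 1 ≤ k) (ha : a ≠ k) :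
    blockCount v k (List.replicate a u) = 0 := by
  rw [blockCount_eq, Finset.card_eq_zero, Finset.filter_eq_empty_iff]
  intro i _ hi
  obtain ⟨h0, h1, h2, h3⟩ := (isBlock_iff _ _ _ _).1 hi
  have e1 := h1 i le_rfl (by omega)
  rw [List.length_replicate] at h0
  rw [List.getElem?_replicate, if_pos (by omega)] at e1
  rw [List.getElem?_replicate] at h2
  rcases i with _ | i
  · rw [if_pos (by omega)] at h2
    exact h2 e1
  · have e3 := h3 i rfl
    rw [List.getElem?_replicate, if_pos (by omega)] at e3
    exact e3 e1

/-- The sign list of the inverse of a word with sign list `s`. -/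
def invSign (s : List ℤˣ) : List ℤˣ := (s.map Neg.neg).reverse

lemma isBlock_invSign {v : ℤˣ} {k : ℕ} {s : List ℤˣ} {i : ℕ} (h : IsBlock v k s i) :
    IsBlock (-v) k (invSign s) (s.length - k - i) := by
  obtain ⟨pre, post, rfl, rfl, h1, h2⟩ := h
  refine ⟨invSign post, invSign pre, ?_, ?_, ?_, ?_⟩
  · simp [invSign]
  · simp only [invSign, List.length_reverse, List.length_map, List.length_append,
      List.length_replicate]
    omega
  · simpa [invSign] using h2
  · simpa [invSign] using h1

lemma invSign_invSign (s : List ℤˣ) : invSign (invSign s) = s := by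
  simp [invSign, List.map_reverse]

lemma length_invSign (s : List ℤˣ) : (invSign s).length = s.length := by
  simp [invSign]

lemma blockCount_le_invSign (v : ℤˣ) (k : ℕ) (s : List ℤˣ) :
    blockCount v k s ≤ blockCount (-v) k (invSign s) := by
  rw [blockCount_eq, blockCount_eq]
  refine Finset.card_le_card_of_injOn (fun i => s.length - k - i) ?_ ?_
  · intro i hi
    simp only [Finset.coe_filter, Set.mem_ofPred_eq, Finset.mem_range, length_invSign] at hi ⊢
    exact ⟨by omega, isBlock_invSign hi.2⟩
  · intro i hi j hj hij
    simp only [Finset.coe_filter, Set.mem_ofPred_eq] at hi hj hij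
    have := hi.2.add_le
    have := hj.2.add_le
    omega

lemma blockCount_invSign (v : ℤˣ) (k : ℕ) (s : List ℤˣ) :
    blockCount (-v) k (invSign s) = blockCount v k s := by
  refine le_antisymm ?_ (blockCount_le_invSign v k s)
  simpa [invSign_invSign] using blockCount_le_invSign (-v) k (invSign s)

/-- The number of maximal blocks of length `k`, of either sign; it has the parity of
`p_k - m_k`. -/
noncomputable def totalCount (k : ℕ) (s : List ℤˣ) : ℕ :=
  blockCount 1 k s + blockCount (-1) k s

lemma totalCount_invSign (k : ℕ) (s : List ℤˣ) :
    totalCount k (invSign s) = totalCount k s := by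
  have h1 := blockCount_invSign 1 k s
  have h2 := blockCount_invSign (-1) k s
  rw [neg_neg] at h2
  unfold totalCount
  omega

/-- Two sign lists merge when the last sign of the first equals the first sign of the second. -/
def Merges (s t : List ℤˣ) : Prop := ∃ u, s.getLast? = some u ∧ t.head? = some u

lemma totalCount_append {k : ℕ} (hk : 1 ≤ k) {s t : List ℤˣ} (h : ¬ Merges s t) :
    totalCount k (s ++ t) = totalCount k s + totalCount k t := by
  unfold totalCount
  rw [blockCount_append hk fun h' => h ⟨_, h'⟩, blockCount_append hk fun h' => h ⟨_, h'⟩]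
  omega

lemma totalCount_replicate_of_ne {u : ℤˣ} {k a : ℕ} (hk : 1 ≤ k) (ha : a ≠ k) :
    totalCount k (List.replicate a u) = 0 := by
  simp [totalCount, blockCount_replicate_of_ne hk ha]

lemma exists_replicate_append (u : ℤˣ) (t : List ℤˣ) :
    ∃ b t', t = List.replicate b u ++ t' ∧ t'.head? ≠ some u := by
  induction t with
  | nil => exact ⟨0, [], by simp⟩
  | cons x t ih =>
    by_cases hx : x = u
    · obtain ⟨b, t', rfl, h⟩ := ih
      exact ⟨b + 1, t', by simp [hx, List.replicate_succ], h⟩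
    · exact ⟨0, x :: t, by simp, by simpa using hx⟩

lemma exists_append_replicate (u : ℤˣ) (s : List ℤˣ) :
    ∃ a s', s = s' ++ List.replicate a u ∧ s'.getLast? ≠ some u := by
  obtain ⟨a, s', h, h'⟩ := exists_replicate_append u s.reverse
  refine ⟨a, s'.reverse, ?_, by simpa using h'⟩
  rw [← List.reverse_reverse s, h]
  simp

lemma not_merges_replicate_right {s : List ℤˣ} {u : ℤˣ} (h : s.getLast? ≠ some u) (a : ℕ) :
    ¬ Merges s (List.replicate a u) := by
  rintro ⟨w, h1, h2⟩
  rw [List.head?_replicate] at h2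
  split at h2 <;> simp_all

lemma not_merges_replicate_left {t : List ℤˣ} {u : ℤˣ} (h : t.head? ≠ some u) (a : ℕ) :
    ¬ Merges (List.replicate a u) t := by
  rintro ⟨w, h1, h2⟩
  rw [List.getLast?_replicate] at h1
  split at h1 <;> simp_all

/-- When a final block of length `a` merges with an initial block of length `b`, only the counts
for the lengths `a`, `b` and `a + b` are affected. -/
lemma exists_error (s t : List ℤˣ) :
    ∃ E : Finset ℕ, E.card ≤ 3 ∧ (¬ Merges s t → E = ∅) ∧
      ∀ k, 1 ≤ k → k ∉ E → totalCount k (s ++ t) = totalCount k s + totalCount k t := by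
  by_cases hm : Merges s t
  · have ⟨u, hs, ht⟩ := hm
    obtain ⟨a, s', rfl, hs'⟩ := exists_append_replicate u s
    obtain ⟨b, t', rfl, ht'⟩ := exists_replicate_append u t
    refine ⟨{a, b, a + b}, Finset.card_le_three, fun h => absurd hm h, fun k hk hkE => ?_⟩
    simp only [Finset.mem_insert, Finset.mem_singleton, not_or] at hkE
    have ha : a ≠ 0 := by
      rintro rfl
      simp_all
    have hmid : ¬ Merges (s' ++ List.replicate (a + b) u) t' := by
      rintro ⟨w, h1, h2⟩
      rw [List.getLast?_append, List.getLast?_replicate, if_neg (by omega)] at h1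
      simp_all
    rw [show s' ++ List.replicate a u ++ (List.replicate b u ++ t') =
        (s' ++ List.replicate (a + b) u) ++ t' by
          simp only [List.replicate_add, List.append_assoc],
      totalCount_append hk hmid, totalCount_append hk (not_merges_replicate_right hs' _),
      totalCount_append hk (not_merges_replicate_right hs' _),
      totalCount_append hk (not_merges_replicate_left ht' _),
      totalCount_replicate_of_ne hk (Ne.symm hkE.1),
      totalCount_replicate_of_ne hk (Ne.symm hkE.2.1),
      totalCount_replicate_of_ne hk (Ne.symm hkE.2.2)]
    omega
  · exact ⟨∅, by simp, fun _ => rfl, fun k hk _ => totalCount_append hk hm⟩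

/-! ### The quasi-morphism inequality for sign lists -/

/-- The set of lengths `k ≥ 1` such that the number of maximal blocks of length `k` is odd. -/
noncomputable def oddSet (s : List ℤˣ) : Finset ℕ :=
  (Finset.Icc 1 s.length).filter fun k => totalCount k s % 2 = 1

lemma mem_oddSet {s : List ℤˣ} {k : ℕ} : k ∈ oddSet s ↔ 1 ≤ k ∧ totalCount k s % 2 = 1 := by
  simp only [oddSet, Finset.mem_filter, Finset.mem_Icc]
  refine ⟨fun h => ⟨h.1.1, h.2⟩, fun h => ⟨⟨h.1, ?_⟩, h.2⟩⟩
  by_contra hlt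
  have := h.2
  simp [totalCount, blockCount_eq_zero (not_le.1 hlt)] at this

/-- The three junctions `S|C`, `C⁻¹|T` and `S|T` cannot all merge: the first and third would
give `C` and `T` the same initial sign, the second would give them opposite ones. -/
lemma not_three_merges (S C T : List ℤˣ) :
    ¬ (Merges S C ∧ Merges (invSign C) T ∧ Merges S T) := by
  rintro ⟨⟨u, h1, h2⟩, ⟨v, h3, h4⟩, ⟨w, h5, h6⟩⟩
  simp only [invSign, List.getLast?_reverse, List.head?_map, h2] at h3
  simp only [h1, h4, Option.map_some, Option.some.injEq] at h3 h5 h6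
  subst h3 h5
  simp at h6

lemma card_oddSet_le (S C T : List ℤˣ) :
    (oddSet (S ++ T)).card ≤ (oddSet (S ++ C)).card + (oddSet (invSign C ++ T)).card + 6 := by
  obtain ⟨E₁, h1, h1', h1''⟩ := exists_error S C
  obtain ⟨E₂, h2, h2', h2''⟩ := exists_error (invSign C) T
  obtain ⟨E₃, h3, h3', h3''⟩ := exists_error S T
  have hE : E₁.card + E₂.card + E₃.card ≤ 6 := by
    by_cases m1 : Merges S C
    · by_cases m2 : Merges (invSign C) T
      · have m3 : ¬ Merges S T := fun m3 => not_three_merges S C T ⟨m1, m2, m3⟩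
        rw [h3' m3, Finset.card_empty]
        omega
      · rw [h2' m2, Finset.card_empty]
        omega
    · rw [h1' m1, Finset.card_empty]
      omega
  have hsub : oddSet (S ++ T) ⊆
      (oddSet (S ++ C) ∪ oddSet (invSign C ++ T)) ∪ (E₁ ∪ E₂ ∪ E₃) := by
    intro k hk
    by_contra hn
    simp only [Finset.mem_union, mem_oddSet, not_or, not_and] at hn hk
    obtain ⟨⟨n1, n2⟩, ⟨e1, e2⟩, e3⟩ := hn
    have hk1 := hk.1
    have := n1 hk1
    have := n2 hk1
    have := h1'' k hk1 e1
    have := h2'' k hk1 e2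
    have := h3'' k hk1 e3
    rw [totalCount_invSign] at *
    omega
  have c0 := Finset.card_le_card hsub
  have c1 := Finset.card_union_le (oddSet (S ++ C) ∪ oddSet (invSign C ++ T)) (E₁ ∪ E₂ ∪ E₃)
  have c2 := Finset.card_union_le (oddSet (S ++ C)) (oddSet (invSign C ++ T))
  have c3 := Finset.card_union_le (E₁ ∪ E₂) E₃
  have c4 := Finset.card_union_le E₁ E₂
  omega

/-! ### Signatures of products -/

lemma Delta_eq (x : HNN A B φ) : Delta A B φ x = (oddSet (sqn A B φ x)).card := by
  rw [Delta, oddSet, Finset.card_filter, Nat.cast_sum]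
  refine Finset.sum_congr rfl fun k _ => ?_
  have : rk A B φ k x = if totalCount k (sqn A B φ x) % 2 = 1 then 1 else 0 := by
    unfold rk dk pk mk totalCount
    split <;> omega
  rw [this]
  split <;> simp

/-- Reducedness, in the form used for `NormalWord.ReducedWord` (with the roles of the subgroups
swapped, as in `HNN`). -/
lemma hnnReduced_iff (l : List (ℤˣ × G)) :
    HNNReduced A B l ↔ l.IsChain fun a b => a.2 ∈ toSubgroup B A a.1 → a.1 = b.1 := by
  have : (fun p q : ℤˣ × G => ¬(p.1 = -1 ∧ p.2 ∈ A ∧ q.1 = 1) ∧ ¬(p.1 = 1 ∧ p.2 ∈ B ∧ q.1 = -1))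
      = fun a b => a.2 ∈ toSubgroup B A a.1 → a.1 = b.1 := by
    funext ⟨u, x⟩ ⟨v, y⟩
    have h1 : (1 : ℤˣ) ≠ -1 := by decide
    rcases Int.units_eq_one_or u with rfl | rfl <;> rcases Int.units_eq_one_or v with rfl | rfl <;>
      simp [h1, h1.symm]
  unfold HNNReduced
  rw [← this]
  exact Iff.rfl

lemma exists_reduced (x : HNN A B φ) :
    ∃ (g0 : G) (l : List (ℤˣ × G)), HNNReduced A B l ∧ wordProd A B φ g0 l = x := by
  obtain ⟨d⟩ := NormalWord.TransversalPair.nonempty G B A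
  let w : NormalWord d := x • NormalWord.empty
  refine ⟨w.head, w.toList, (hnnReduced_iff A B _).2 w.chain, ?_⟩
  have := NormalWord.prod_smul φ.symm x (NormalWord.empty (d := d))
  rw [NormalWord.prod_empty, mul_one] at this
  exact this

lemma sqn_eq {x : HNN A B φ} {g0 : G} {l : List (ℤˣ × G)} (hl : HNNReduced A B l)
    (hx : wordProd A B φ g0 l = x) : sqn A B φ x = l.map Prod.fst := by
  have h : ∃ p : G × List (ℤˣ × G), HNNReduced A B p.2 ∧ wordProd A B φ p.1 p.2 = x :=
    ⟨(g0, l), hl, hx⟩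
  rw [sqn, dif_pos h]
  have hc := Classical.choose_spec h
  exact (ReducedWord.map_fst_eq_and_of_prod_eq φ.symm
    (w₁ := ⟨_, _, (hnnReduced_iff A B _).1 hc.1⟩) (w₂ := ⟨g0, l, (hnnReduced_iff A B _).1 hl⟩)
    (hc.2.trans hx.symm)).1

lemma wordProd_mul_of (g0 : G) (l : List (ℤˣ × G)) (u : ℤˣ) (x : G) (h0 : G)
    (m : List (ℤˣ × G)) :
    wordProd A B φ g0 (l ++ [(u, x)]) * wordProd A B φ h0 m =
      wordProd A B φ g0 (l ++ [(u, x * h0)] ++ m) := by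
  simp [wordProd, mul_assoc]

lemma t_conj (u : ℤˣ) {x : G} (hx : x ∈ toSubgroup B A u) :
    ∃ c : G, (t ^ (u : ℤ) * of x * t ^ ((-u : ℤˣ) : ℤ) : HNN A B φ) = of c := by
  rcases Int.units_eq_one_or u with rfl | rfl
  · refine ⟨φ.symm ⟨x, hx⟩, ?_⟩
    rw [equiv_eq_conj]
    simp
  · refine ⟨φ ⟨x, hx⟩, ?_⟩
    have := equiv_symm_eq_conj (φ := φ.symm) ⟨x, hx⟩
    rw [MulEquiv.symm_symm] at this
    rw [this]
    simp

/-- The product of two reduced words is brought to reduced form by cancelling a suffix of the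
first against a prefix of the second whose sign list is inverse to it. -/
lemma exists_cancellation (g0 : G) (l : List (ℤˣ × G)) (hl : HNNReduced A B l) :
    ∀ (h0 : G) (m : List (ℤˣ × G)), HNNReduced A B m →
      ∃ (k0 : G) (n : List (ℤˣ × G)) (S C T : List ℤˣ), HNNReduced A B n ∧
        wordProd A B φ k0 n = wordProd A B φ g0 l * wordProd A B φ h0 m ∧
        l.map Prod.fst = S ++ C ∧ m.map Prod.fst = invSign C ++ T ∧
        n.map Prod.fst = S ++ T := by
  induction l using List.reverseRecOn with
  | nil =>
    intro h0 m hm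
    exact ⟨g0 * h0, m, [], [], m.map Prod.fst, hm, by simp [wordProd, mul_assoc],
      by simp, by simp [invSign], by simp⟩
  | append_singleton l p ih =>
    obtain ⟨u, x⟩ := p
    intro h0 m hm
    by_cases hc : ∃ y m', m = (-u, y) :: m' ∧ x * h0 ∈ toSubgroup B A u
    · obtain ⟨y, m', rfl, hx⟩ := hc
      obtain ⟨c, hc⟩ := t_conj A B φ u hx
      rw [hnnReduced_iff] at hl hm
      obtain ⟨k0, n, S, C, T, hn, hprod, e1, e2, e3⟩ :=
        ih ((hnnReduced_iff A B _).2 (List.isChain_append.1 hl).1) (c * y) m'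
          ((hnnReduced_iff A B _).2 (List.isChain_cons.1 hm).2)
      refine ⟨k0, n, S, C ++ [u], T, hn, ?_, by simp [e1], by simp [e2, invSign], e3⟩
      rw [hprod]
      simp only [wordProd, map_mul, ← hc]
      simp [mul_assoc]
    · refine ⟨g0, l ++ [(u, x * h0)] ++ m, l.map Prod.fst ++ [u], [], m.map Prod.fst, ?_,
        (wordProd_mul_of A B φ _ _ _ _ _ _).symm, by simp, by simp [invSign], by simp⟩
      rw [hnnReduced_iff] at hl hm ⊢
      rw [List.isChain_append] at hl
      refine List.isChain_append.2 ⟨List.isChain_append.2 ⟨hl.1, by simp, ?_⟩, hm, ?_⟩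
      · intro a ha b hb
        have := hl.2.2 a ha (u, x) (by simp)
        simp only [List.head?_cons, Option.mem_def, Option.some.injEq] at hb
        subst hb
        exact this
      · intro a ha b hb
        simp only [List.getLast?_append, List.getLast?_singleton, Option.some_or,
          Option.mem_def, Option.some.injEq] at ha
        subst ha
        intro hmem
        by_contra hne
        obtain ⟨v, y⟩ := b
        obtain ⟨m', rfl⟩ : ∃ m', m = (v, y) :: m' := by
          cases m <;> simp_all
        refine hc ⟨y, m', ?_, hmem⟩
        have hv : v = -u := by
          simp only at hne
          rcases Int.units_eq_one_or u with rfl | rfl <;>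
            rcases Int.units_eq_one_or v with rfl | rfl <;> simp_all
        rw [hv]

/-- `Δ` is a quasi-homomorphism on the HNN extension:
`Δ(gh) ≤ Δ(g) + Δ(h) + 6` for all `g, h`. -/
theorem hnn_delta_quasimorphism
    {G : Type*} [Group G] (A B : Subgroup G) (φ : A ≃* B)
    (g h : HNN A B φ) :
    Delta A B φ (g * h) ≤ Delta A B φ g + Delta A B φ h + 6 := by
  obtain ⟨g0, l, hl, hg⟩ := exists_reduced A B φ g
  obtain ⟨h0, m, hm, hh⟩ := exists_reduced A B φ h
  obtain ⟨k0, n, S, C, T, hn, hprod, e1, e2, e3⟩ := exists_cancellation A B φ g0 l hl h0 m hm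
  rw [hg, hh] at hprod
  rw [Delta_eq, Delta_eq, Delta_eq, sqn_eq A B φ hl hg, sqn_eq A B φ hm hh, sqn_eq A B φ hn hprod,
    e1, e2, e3]
  exact_mod_cast card_oddSet_le S C T

end PalHNN
end

section
/- Let G = A *_C B be an amalgamated free product and let g ∈ G be a group-palindrome with reduced expression x₁⋯x_n of syllable length n. If n = 2k, then g = x₁x₂⋯x_{k−1} x_k' x_{k−1}⋯x₂x₁ where x_k' = x_k c x_k for some c ∈ C. If n = 2k+1, then g = x₁x₂⋯x_k x_{k+1}'' x_k⋯x₂x₁ where x_{k+1}'' = x_{k+1} c for some c ∈ C. -/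
/-!
The normal form theorem says that a nonempty alternating product of syllables outside `C` does
not lie in `C` (`StrictReduced.eq_nil`).  It is transported from Mathlib's `Monoid.PushoutI`
along a homomorphism `toPushout` out of the amalgam; since the syllables of a reduced sequence
map to letters outside the base group, no inverse of this homomorphism is needed.

Consequently, if `x₁ ⋯ xₙ = c y₁ ⋯ yₙ` are reduced with `c ∈ C`, then `x₁⁻¹ c y₁ ∈ C`, because
otherwise `yₙ⁻¹ ⋯ y₁⁻¹ c⁻¹ x₁ ⋯ xₙ` would be a nonempty reduced expression of `1`
(`head_mem`).  By induction all prefixes satisfy `y₁ ⋯ y_m ∈ x₁ ⋯ x_m C` (`prefix_mem`).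

For a group-palindrome this is applied to the expression `x₁ ⋯ xₙ` and its reverse.  Cutting
the reverse after `m = ⌈n / 2⌉` syllables gives
`g = (xₙ ⋯ x_{n-m+1}) (x_{n-m} ⋯ x₁) = x₁ ⋯ x_m c x_{n-m} ⋯ x₁`, which is the claim for both
parities.
-/

open Monoid

open scoped Classical

namespace PalAmalg

variable {A B C : Type*} [Group A] [Group B] [Group C]
variable (i : C →* A) (j : C →* B)

/-- The free product of `A` and `B` amalgamated over `C` (embedded in `A` via `i` and in `B`
via `j`): the quotient of the free product `A ∗ B` by the normal subgroup generated by the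
elements `i c * (j c)⁻¹`, `c ∈ C`. -/
abbrev Amalg : Type _ :=
  Coprod A B ⧸ Subgroup.normalClosure
    {x : Coprod A B | ∃ c : C, x = Coprod.inl (i c) * (Coprod.inr (j c))⁻¹}

/-- The canonical map of the factor `A` into the amalgam. -/
def ofA : A →* Amalg i j := (QuotientGroup.mk' _).comp Coprod.inl

/-- The canonical map of the factor `B` into the amalgam. -/
def ofB : B →* Amalg i j := (QuotientGroup.mk' _).comp Coprod.inr

/-- The image of the factor `A` in the amalgam. -/
def AG : Set (Amalg i j) := Set.range (ofA i j)

/-- The image of the factor `B` in the amalgam. -/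
def BG : Set (Amalg i j) := Set.range (ofB i j)

/-- The image of the amalgamated subgroup `C` in the amalgam. -/
def CG : Set (Amalg i j) := Set.range ((ofA i j).comp i)

/-- The double coset `C v C` in the amalgam. -/
def DCoset (v : Amalg i j) : Set (Amalg i j) :=
  {x | ∃ c1 ∈ CG i j, ∃ c2 ∈ CG i j, x = c1 * v * c2}

/-- A sequence `x₁, …, xₙ` of elements of the amalgam is reduced if every `xᵢ` lies in one of
the factors, successive `xᵢ, xᵢ₊₁` lie in different factors, no `xᵢ` lies in `C` when `n > 1`,
and `x₁ ≠ 1` when `n = 1`. -/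
def Reduced (l : List (Amalg i j)) : Prop :=
  (∀ x ∈ l, x ∈ AG i j ∪ BG i j) ∧
  List.Chain' (fun x y => ¬(x ∈ AG i j ∧ y ∈ AG i j) ∧ ¬(x ∈ BG i j ∧ y ∈ BG i j)) l ∧
  (1 < l.length → ∀ x ∈ l, x ∉ CG i j) ∧
  (l.length = 1 → ∀ x ∈ l, x ≠ 1)

/-- `g` is a group-palindrome if it has a reduced expression `x₁ ⋯ xₙ` whose reverse
`xₙ ⋯ x₁` represents the same element of the amalgam. -/
def GroupPalindrome (g : Amalg i j) : Prop :=
  ∃ l : List (Amalg i j), Reduced i j l ∧ l.prod = g ∧ l.reverse.prod = g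

/-- A special sequence (with respect to a fixed `a ∈ A`): an alternating sequence of elements
of the factors in which every syllable lying in the double coset `C a C` is the letter `a`
itself, and every syllable lying in `C a⁻¹ C` is the letter `a⁻¹` itself. -/
def IsSpecialSeq (a : A) (l : List (Amalg i j)) : Prop :=
  (∀ x ∈ l, x ∈ AG i j ∪ BG i j) ∧
  List.Chain' (fun x y => ¬(x ∈ AG i j ∧ y ∈ AG i j) ∧ ¬(x ∈ BG i j ∧ y ∈ BG i j)) l ∧
  (1 < l.length → ∀ x ∈ l, x ∉ CG i j) ∧
  (∀ x ∈ l, x ∈ DCoset i j (ofA i j a) → x = ofA i j a) ∧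
  (∀ x ∈ l, x ∈ DCoset i j (ofA i j a)⁻¹ → x = (ofA i j a)⁻¹)

/-- `l` is a special form of `g`: up to boundary elements `u, u'` of `C` (which arise when the
first or last syllable is replaced by `a^{±1}`), the special sequence `l` represents `g`. -/
def IsSpecialForm (a : A) (g : Amalg i j) (l : List (Amalg i j)) : Prop :=
  IsSpecialSeq i j a l ∧ ∃ u ∈ CG i j, ∃ u' ∈ CG i j, u * l.prod * u' = g

/-- A chosen special form of `g`. -/
noncomputable def spform (a : A) (g : Amalg i j) : List (Amalg i j) :=
  if h : ∃ l : List (Amalg i j), IsSpecialForm i j a g l then Classical.choose h else []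

/-- The number of `v`-segments of length `2k-1` in the list `l`: subwords
`v x₁ ⋯ x_{2k-1} v` with no `x_t = v`. -/
noncomputable def segCount (v : Amalg i j) (k : ℕ) (l : List (Amalg i j)) : ℕ :=
  ((Finset.range (l.length + 1)).filter fun s => ∃ l₁ m l₂ : List (Amalg i j),
    l = l₁ ++ [v] ++ m ++ [v] ++ l₂ ∧ l₁.length = s ∧ m.length = 2 * k - 1 ∧ v ∉ m).card

/-- `p_k(g)`: the number of `a`-segments of length `2k-1` in the special form of `g`. -/
noncomputable def pk (a : A) (k : ℕ) (g : Amalg i j) : ℕ :=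
  segCount i j (ofA i j a) k (spform i j a g)

/-- `m_k(g)`: the number of `a⁻¹`-segments of length `2k-1` in the special form of `g`. -/
noncomputable def mk (a : A) (k : ℕ) (g : Amalg i j) : ℕ :=
  segCount i j (ofA i j a)⁻¹ k (spform i j a g)

/-- `d_k = p_k - m_k`. -/
noncomputable def dk (a : A) (k : ℕ) (g : Amalg i j) : ℤ :=
  (pk i j a k g : ℤ) - (mk i j a k g : ℤ)

/-- `r_k ∈ {0,1}`: the remainder of `d_k` modulo 2. -/
noncomputable def rk (a : A) (k : ℕ) (g : Amalg i j) : ℤ := dk i j a k g % 2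

/-- The quasi-homomorphism `Δ(g) = Σ_{k ≥ 1} r_k(g)` (a finite sum, since `r_k = 0` for `k`
larger than the length of the special form). -/
noncomputable def Delta (a : A) (g : Amalg i j) : ℝ :=
  ∑ k ∈ Finset.Icc 1 (spform i j a g).length, (rk i j a k g : ℝ)


/-! ### The normal form theorem for the amalgam -/

/-- The two factors of the free product `A ∗ B` as subgroups of it, indexed by `Bool`
(`true` for `A`, `false` for `B`).  Working inside `A ∗ B` gives a family in a single universe,
as `Monoid.PushoutI` requires. -/
def coprodFactor (A B : Type*) [Group A] [Group B] : Bool → Subgroup (Coprod A B)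
  | true => (Coprod.inl : A →* Coprod A B).range
  | false => (Coprod.inr : B →* Coprod A B).range

/-- The embeddings of `C` into the two factors of `A ∗ B`. -/
def coprodBase : ∀ b : Bool, C →* coprodFactor A B b
  | true => (Coprod.inl : A →* Coprod A B).rangeRestrict.comp i
  | false => (Coprod.inr : B →* Coprod A B).rangeRestrict.comp j

lemma coprodBase_injective (hi : Function.Injective i) (hj : Function.Injective j) (b : Bool) :
    Function.Injective (coprodBase i j b) := by
  cases b
  · intro x y h
    exact hj (Coprod.inr_injective (congrArg Subtype.val h))
  · intro x y h
    exact hi (Coprod.inl_injective (congrArg Subtype.val h))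

/-- The comparison map from the amalgam to Mathlids pushout of groups. -/
noncomputable def toPushout : Amalg i j →* PushoutI (coprodBase i j) :=
  QuotientGroup.lift _
    (Coprod.lift
      ((PushoutI.of (φ := coprodBase i j) true).comp
        (Coprod.inl : A →* Coprod A B).rangeRestrict)
      ((PushoutI.of (φ := coprodBase i j) false).comp
        (Coprod.inr : B →* Coprod A B).rangeRestrict))
    (by
      refine (Subgroup.normalClosure_le_normal (N := MonoidHom.ker _)) ?_
      rintro _ ⟨c, rfl⟩
      have h1 := PushoutI.of_apply_eq_base (coprodBase i j) true c
      have h2 := PushoutI.of_apply_eq_base (coprodBase i j) false c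
      simp only [SetLike.mem_coe, MonoidHom.mem_ker, map_mul, map_inv, Coprod.lift_apply_inl,
        Coprod.lift_apply_inr]
      exact mul_inv_eq_one.2 (h1.trans h2.symm))

lemma toPushout_ofA (a : A) : toPushout i j (ofA i j a) =
    PushoutI.of (φ := coprodBase i j) true ((Coprod.inl : A →* Coprod A B).rangeRestrict a) := by
  simp [toPushout, ofA]
  rfl

lemma toPushout_ofB (b : B) : toPushout i j (ofB i j b) =
    PushoutI.of (φ := coprodBase i j) false ((Coprod.inr : B →* Coprod A B).rangeRestrict b) := by
  simp [toPushout, ofB]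
  rfl

lemma ofA_eq_ofB (c : C) : ofA i j (i c) = ofB i j (j c) := by
  rw [← mul_inv_eq_one, ← map_inv]
  refine (QuotientGroup.eq_one_iff
    (Coprod.inl (i c) * Coprod.inr (j c)⁻¹ : Coprod A B)).2 ?_
  exact Subgroup.subset_normalClosure ⟨c, by rw [map_inv]⟩

/-- The images of the factors in the amalgam, as subgroups indexed by `Bool`. -/
def fac : Bool → Subgroup (Amalg i j)
  | true => (ofA i j).range
  | false => (ofB i j).range

/-- The image of `C` in the amalgam, as a subgroup. -/
def base : Subgroup (Amalg i j) := ((ofA i j).comp i).range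

lemma base_le_fac (b : Bool) : base i j ≤ fac i j b := by
  rintro _ ⟨c, rfl⟩
  cases b
  · exact ⟨j c, (ofA_eq_ofB i j c).symm⟩
  · exact ⟨i c, rfl⟩

/-- Strictly reduced sequences, each syllable carrying the name of a factor containing it.
The labels make it unnecessary to know that a syllable outside `C` lies in only one factor. -/
def StrictReduced (L : List (Bool × Amalg i j)) : Prop :=
  (∀ p ∈ L, p.2 ∈ fac i j p.1 ∧ p.2 ∉ base i j) ∧ L.IsChain (fun p q => p.1 ≠ q.1)

/-- The element of the amalgam represented by a labelled sequence. -/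
def val (L : List (Bool × Amalg i j)) : Amalg i j := (L.map Prod.snd).prod

lemma val_append (L M : List (Bool × Amalg i j)) :
    val i j (L ++ M) = val i j L * val i j M := by
  simp [val]

lemma val_cons (p : Bool × Amalg i j) (M : List (Bool × Amalg i j)) :
    val i j (p :: M) = p.2 * val i j M := by
  simp [val]

/-- A syllable outside `C` comes from an element of a factor of `A ∗ B` outside the image
of `C`. -/
lemma exists_lift (p : Bool × Amalg i j) (h : p.2 ∈ fac i j p.1 ∧ p.2 ∉ base i j) :
    ∃ y : coprodFactor A B p.1, toPushout i j p.2 = PushoutI.of (φ := coprodBase i j) p.1 y ∧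
      y ∉ (coprodBase i j p.1).range := by
  obtain ⟨b, x⟩ := p
  obtain ⟨h1, h2⟩ := h
  cases b
  · obtain ⟨y, rfl⟩ := h1
    refine ⟨_, toPushout_ofB i j y, ?_⟩
    rintro ⟨c, hc⟩
    have : j c = y := Coprod.inr_injective (congrArg Subtype.val hc)
    subst this
    exact h2 ⟨c, ofA_eq_ofB i j c⟩
  · obtain ⟨y, rfl⟩ := h1
    refine ⟨_, toPushout_ofA i j y, ?_⟩
    rintro ⟨c, hc⟩
    have : i c = y := Coprod.inl_injective (congrArg Subtype.val hc)
    subst this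
    exact h2 ⟨c, rfl⟩

/-- **Normal form theorem**: a strictly reduced sequence representing an element of `C` is
empty. -/
lemma StrictReduced.eq_nil {i : C →* A} {j : C →* B}
    (hi : Function.Injective i) (hj : Function.Injective j)
    {L : List (Bool × Amalg i j)} (hL : StrictReduced i j L) (h : val i j L ∈ base i j) :
    L = [] := by
  choose! y hy1 hy2 using exists_lift i j
  let f : Bool × Amalg i j → Σ b, coprodFactor A B b := fun p => ⟨p.1, y p⟩
  let w : CoprodI.Word (fun b => coprodFactor A B b) :=
    { toList := L.map f
      ne_one := by
        intro s hs
        obtain ⟨p, hp, rfl⟩ := List.mem_map.1 hs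
        intro h1
        refine hy2 p (hL.1 p hp) ?_
        have h1 : y p = 1 := h1
        rw [h1]
        exact one_mem _
      chain_ne := (List.isChain_map f).2 hL.2 }
  have hw : PushoutI.Reduced (coprodBase i j) w := by
    intro s hs
    obtain ⟨p, hp, rfl⟩ := List.mem_map.1 hs
    exact hy2 p (hL.1 p hp)
  have hprod : PushoutI.ofCoprodI w.prod = toPushout i j (val i j L) := by
    simp only [CoprodI.Word.prod, w, val, map_list_prod, List.map_map]
    congr 1
    refine List.map_congr_left fun p hp => ?_
    simp [f, hy1 p (hL.1 p hp)]
  have hempty := hw.eq_empty_of_mem_range (coprodBase_injective i j hi hj) (by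
    rw [hprod]
    obtain ⟨c, hc⟩ := h
    refine ⟨c, ?_⟩
    rw [← hc, MonoidHom.comp_apply, toPushout_ofA, ← PushoutI.of_apply_eq_base _ true]
    rfl)
  have : L.map f = [] := congrArg CoprodI.Word.toList hempty
  simpa using this

/-! ### Comparing prefixes of two reduced expressions -/

/-- The labelled sequence representing the inverse element. -/
def invSeq (L : List (Bool × Amalg i j)) : List (Bool × Amalg i j) :=
  (L.map fun p => (p.1, p.2⁻¹)).reverse

lemma val_invSeq (L : List (Bool × Amalg i j)) : val i j (invSeq i j L) = (val i j L)⁻¹ := by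
  simp [val, invSeq, List.prod_inv_reverse, List.map_reverse, Function.comp_def]

lemma StrictReduced.reverse {i : C →* A} {j : C →* B} {L : List (Bool × Amalg i j)}
    (h : StrictReduced i j L) : StrictReduced i j L.reverse := by
  refine ⟨fun p hp => h.1 p (List.mem_reverse.1 hp), ?_⟩
  rw [List.isChain_reverse]
  exact h.2.imp fun _ _ => Ne.symm

lemma StrictReduced.invSeq {i : C →* A} {j : C →* B} {L : List (Bool × Amalg i j)}
    (h : StrictReduced i j L) : StrictReduced i j (invSeq i j L) := by
  refine StrictReduced.reverse ⟨?_, (List.isChain_map _).2 h.2⟩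
  intro q hq
  obtain ⟨p, hp, rfl⟩ := List.mem_map.1 hq
  simpa using h.1 p hp

lemma StrictReduced.tail {i : C →* A} {j : C →* B} {p : Bool × Amalg i j}
    {L : List (Bool × Amalg i j)}
    (h : StrictReduced i j (p :: L)) : StrictReduced i j L :=
  ⟨fun q hq => h.1 q (List.mem_cons_of_mem _ hq), h.2.tail⟩

/-- The first syllable may be replaced by another one of the same factor outside `C`. -/
lemma StrictReduced.replace_head {i : C →* A} {j : C →* B} {b : Bool} {x y : Amalg i j}
    {L : List (Bool × Amalg i j)} (h : StrictReduced i j ((b, x) :: L))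
    (hy : y ∈ fac i j b) (hyb : y ∉ base i j) : StrictReduced i j ((b, y) :: L) := by
  refine ⟨?_, h.2.imp_head (x := (b, x)) (y := (b, y)) fun hz => hz⟩
  intro q hq
  rcases List.mem_cons.1 hq with rfl | hq
  · exact ⟨hy, hyb⟩
  · exact h.1 q (List.mem_cons_of_mem _ hq)

/-- If `x₁ ⋯ xₙ = c y₁ ⋯ yₘ` with both sides reduced and `c ∈ C`, then
`x₁⁻¹ c y₁ ∈ C`: otherwise `(y₁ ⋯ yₘ)⁻¹ c⁻¹ x₁ ⋯ xₙ` would become, after merging `y₁⁻¹ c⁻¹ x₁`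
if `x₁` and `y₁` are in the same factor, a nonempty reduced expression of `1`. -/
lemma head_mem {i : C →* A} {j : C →* B}
    (hi : Function.Injective i) (hj : Function.Injective j)
    {p q : Bool × Amalg i j} {L M : List (Bool × Amalg i j)} {c : Amalg i j}
    (hc : c ∈ base i j) (hL : StrictReduced i j (p :: L)) (hM : StrictReduced i j (q :: M))
    (h : val i j (p :: L) = c * val i j (q :: M)) : p.2⁻¹ * c * q.2 ∈ base i j := by
  obtain ⟨b, x⟩ := p
  obtain ⟨d, y⟩ := q
  obtain ⟨hx, hxC⟩ := hL.1 (b, x) (by simp)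
  obtain ⟨hy, hyC⟩ := hM.1 (d, y) (by simp)
  simp only [val_cons] at h hx hxC hy hyC ⊢
  by_contra hcon
  have hI := hM.invSeq
  have hsplit : PalAmalg.invSeq i j ((d, y) :: M) = PalAmalg.invSeq i j M ++ [(d, y⁻¹)] := by
    simp [PalAmalg.invSeq]
  rw [hsplit] at hI
  by_cases hb : b = d
  · subst hb
    -- The middle syllables merge into the single syllable `z`.
    let z := y⁻¹ * c⁻¹ * x
    have hz : z ∉ base i j := by
      intro hz
      apply hcon
      have := inv_mem hz
      simpa [z, mul_assoc] using this
    have hzf : z ∈ fac i j b :=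
      mul_mem (mul_mem (inv_mem hy) (inv_mem (base_le_fac i j b hc))) hx
    have hLz := hL.replace_head hzf hz
    have hred : StrictReduced i j (PalAmalg.invSeq i j M ++ (b, z) :: L) := by
      refine ⟨?_, ?_⟩
      · intro r hr
        rcases List.mem_append.1 hr with hr | hr
        · exact hI.1 r (List.mem_append_left _ hr)
        · exact hLz.1 r hr
      · rw [List.isChain_split]
        refine ⟨?_, hLz.2⟩
        have := hI.2
        rw [List.isChain_append] at this ⊢
        refine ⟨this.1, by simp, ?_⟩
        simpa using this.2.2
    have := hred.eq_nil hi hj (by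
      have : val i j (PalAmalg.invSeq i j M ++ (b, z) :: L) = 1 := by
        rw [val_append, val_invSeq, val_cons]
        simp only [z, mul_assoc]
        rw [h]
        group
      rw [this]
      exact one_mem _)
    simp at this
  · let z := c⁻¹ * x
    have hz : z ∉ base i j := fun hz => hxC (by simpa [z] using mul_mem hc hz)
    have hzf : z ∈ fac i j b := mul_mem (inv_mem (base_le_fac i j b hc)) hx
    have hLz := hL.replace_head hzf hz
    have hred : StrictReduced i j ((PalAmalg.invSeq i j M ++ [(d, y⁻¹)]) ++ (b, z) :: L) := by
      refine ⟨?_, ?_⟩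
      · intro r hr
        rcases List.mem_append.1 hr with hr | hr
        · exact hI.1 r hr
        · exact hLz.1 r hr
      · rw [List.isChain_append]
        refine ⟨hI.2, hLz.2, ?_⟩
        simpa using Ne.symm hb
    have := hred.eq_nil hi hj (by
      have : val i j ((PalAmalg.invSeq i j M ++ [(d, y⁻¹)]) ++ (b, z) :: L) = 1 := by
        rw [val_append, ← hsplit, val_invSeq, val_cons, val_cons]
        simp only [z, mul_assoc]
        rw [h]
        group
      rw [this]
      exact one_mem _)
    simp at this

/-- Two reduced expressions of the same length representing the same element up to a left
factor in `C` have prefixes that agree up to `C`. -/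
lemma prefix_mem {i : C →* A} {j : C →* B}
    (hi : Function.Injective i) (hj : Function.Injective j) :
    ∀ (L M : List (Bool × Amalg i j)) (c : Amalg i j), c ∈ base i j →
      StrictReduced i j L → StrictReduced i j M → L.length = M.length →
      val i j L = c * val i j M → ∀ k : ℕ,
      (val i j (L.take k))⁻¹ * c * val i j (M.take k) ∈ base i j
  | [], [], c, hc, _, _, _, _, k => by simpa [val] using hc
  | p :: L, q :: M, c, hc, _, _, _, _, 0 => by simpa [val] using hc
  | p :: L, q :: M, c, hc, hL, hM, hlen, h, k + 1 => by
    have hd := head_mem hi hj hc hL hM h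
    have := prefix_mem hi hj L M _ hd hL.tail hM.tail (by simpa using hlen) (by
      rw [val_cons, val_cons] at h
      rw [mul_assoc, mul_assoc, ← h, inv_mul_cancel_left]) k
    simpa [val_cons, mul_assoc] using this

/-- The syllables of a reduced sequence of length at least two can be labelled. -/
lemma exists_label {i : C →* A} {j : C →* B} {l : List (Amalg i j)} (h : Reduced i j l)
    (hlen : 1 < l.length) : ∃ L, StrictReduced i j L ∧ L.map Prod.snd = l := by
  obtain ⟨h1, h2, h3, -⟩ := h
  let f : Amalg i j → Bool × Amalg i j := fun x => (decide (x ∈ AG i j), x)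
  have hf : ∀ x ∈ l, x ∈ fac i j (f x).1 := by
    intro x hx
    by_cases hA : x ∈ AG i j
    · simpa [f, hA] using (show x ∈ fac i j true from hA)
    · simpa [f, hA] using (show x ∈ fac i j false from (h1 x hx).resolve_left hA)
  refine ⟨l.map f, ⟨?_, ?_⟩, by simp [f, Function.comp_def]⟩
  · intro p hp
    obtain ⟨x, hx, rfl⟩ := List.mem_map.1 hp
    exact ⟨hf x hx, h3 hlen x hx⟩
  · rw [List.isChain_map]
    refine List.IsChain.imp_of_mem_imp ?_ h2
    intro x y hx hy hxy heq
    have hfx := hf x hx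
    have hfy := hf y hy
    rw [← heq] at hfy
    cases hb : (f x).1 <;> rw [hb] at hfx hfy
    · exact hxy.2 ⟨hfx, hfy⟩
    · exact hxy.1 ⟨hfx, hfy⟩

/-- The first `k` syllables of a group-palindrome agree, up to `C`, with the first `k`
syllables of its reverse. -/
lemma exists_take_reverse {i : C →* A} {j : C →* B}
    (hi : Function.Injective i) (hj : Function.Injective j)
    {l : List (Amalg i j)} (hred : Reduced i j l) (hlen : 1 < l.length)
    (hpal : l.reverse.prod = l.prod) (k : ℕ) :
    ∃ c ∈ CG i j, (l.reverse.take k).prod = (l.take k).prod * c := by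
  obtain ⟨L, hL, rfl⟩ := exists_label hred hlen
  have := prefix_mem hi hj L L.reverse 1 (one_mem _) hL hL.reverse (by simp) (by
    rw [one_mul, val, val, List.map_reverse]
    exact hpal.symm) k
  rw [mul_one] at this
  refine ⟨_, this, ?_⟩
  simp [val, List.map_take, List.map_reverse]

/-- **Normal form of group-palindromes in an amalgamated free product.**  If `g` is a
group-palindrome with reduced expression `x₁ ⋯ xₙ`, then:
* if `n = 2k` (with `k ≥ 1`), `g = x₁ ⋯ x_{k-1} (x_k c x_k) x_{k-1} ⋯ x₁` for some `c ∈ C`;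
* if `n = 2k + 1`, `g = x₁ ⋯ x_k (x_{k+1} c) x_k ⋯ x₁` for some `c ∈ C`. -/
theorem amalgam_group_palindrome_normal_form
    (hi : Function.Injective i) (hj : Function.Injective j)
    (g : Amalg i j) (l : List (Amalg i j)) (hred : Reduced i j l)
    (hprod : l.prod = g) (hpal : l.reverse.prod = g) :
    (∀ k : ℕ, l.length = 2 * (k + 1) →
      ∃ c ∈ CG i j,
        g = (l.take k).prod * (l.getD k 1 * c * l.getD k 1) * (l.take k).reverse.prod) ∧
    (∀ k : ℕ, l.length = 2 * k + 1 →
      ∃ c ∈ CG i j,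
        g = (l.take k).prod * (l.getD k 1 * c) * (l.take k).reverse.prod) := by
  subst hprod
  constructor
  · intro k hk
    obtain ⟨c, hc, h⟩ := exists_take_reverse hi hj hred (by omega) hpal (k + 1)
    refine ⟨c, hc, ?_⟩
    have hkl : k < l.length := by omega
    have hdrop : l.reverse.drop (k + 1) = (l.take (k + 1)).reverse := by
      rw [List.drop_reverse]
      congr 2
      omega
    rw [← hpal, ← List.prod_take_mul_prod_drop l.reverse (k + 1), h, hdrop,
      List.take_succ_eq_append_getElem hkl, List.getD_eq_getElem _ _ hkl]
    simp only [List.prod_append, List.reverse_append, List.reverse_singleton, List.prod_singleton,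
      mul_assoc]
  · intro k hk
    rcases Nat.eq_zero_or_pos k with rfl | hk0
    · obtain ⟨x, rfl⟩ := List.length_eq_one_iff.1 hk
      exact ⟨1, ⟨1, map_one _⟩, by simp⟩
    · obtain ⟨c, hc, h⟩ := exists_take_reverse hi hj hred (by omega) hpal (k + 1)
      refine ⟨c, hc, ?_⟩
      have hkl : k < l.length := by omega
      have hdrop : l.reverse.drop (k + 1) = (l.take k).reverse := by
        rw [List.drop_reverse]
        congr 2
        omega
      rw [← hpal, ← List.prod_take_mul_prod_drop l.reverse (k + 1), h, hdrop,
        List.take_succ_eq_append_getElem hkl, List.getD_eq_getElem _ _ hkl]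
      simp only [List.prod_append, List.prod_singleton, mul_assoc]

end PalAmalg
end
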